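/- Let T be a CNAT which has an internal dot whose two children are a leaf and an internal dot. Then T contains at least one long leaf. -/

import Mathlib

/-!
Formalization of complete non-ambiguous trees (CNATs).

A CNAT of size `n` is modelled as a Boolean filling `D : Fin n → Fin n → Bool`
of the `n × n` grid (`D i j = true` meaning that cell in row `i`, column `j`
is dotted; rows are numbered from the top, columns from the left, `0`-based),
satisfying the root, non-ambiguity, minimality and completeness conditions.
-/

namespace CNATf

/-- A filling of the `n × n` grid. -/
abbrev Grid (n : ℕ) := Fin n → Fin n → Bool

/-- Cell `(i, j)` is dotted. -/
def Dotted {n : ℕ} (D : Grid n) (i j : Fin n) : Prop := D i j = true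

/-- There is a dotted cell above `(i, j)` in the same column. -/
def HasDotAbove {n : ℕ} (D : Grid n) (i j : Fin n) : Prop :=
  ∃ i' : Fin n, i' < i ∧ Dotted D i' j

/-- There is a dotted cell to the left of `(i, j)` in the same row. -/
def HasDotLeft {n : ℕ} (D : Grid n) (i j : Fin n) : Prop :=
  ∃ j' : Fin n, j' < j ∧ Dotted D i j'

/-- There is a dotted cell below `(i, j)` in the same column. -/
def HasDotBelow {n : ℕ} (D : Grid n) (i j : Fin n) : Prop :=
  ∃ i' : Fin n, i < i' ∧ Dotted D i' j

/-- There is a dotted cell to the right of `(i, j)` in the same row. -/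
def HasDotRight {n : ℕ} (D : Grid n) (i j : Fin n) : Prop :=
  ∃ j' : Fin n, j < j' ∧ Dotted D i j'

/-- `D` is a complete non-ambiguous tree (CNAT) on the `n × n` grid:
root, non-ambiguity, minimality (rows and columns), completeness. -/
def IsCNAT {n : ℕ} (D : Grid n) : Prop :=
  (∀ i j : Fin n, (i : ℕ) = 0 → (j : ℕ) = 0 → Dotted D i j) ∧
  (∀ i j : Fin n, Dotted D i j → ¬((i : ℕ) = 0 ∧ (j : ℕ) = 0) →
      Xor' (HasDotAbove D i j) (HasDotLeft D i j)) ∧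
  (∀ i : Fin n, ∃ j : Fin n, Dotted D i j) ∧
  (∀ j : Fin n, ∃ i : Fin n, Dotted D i j) ∧
  (∀ i j : Fin n, Dotted D i j →
      (HasDotBelow D i j ∧ HasDotRight D i j) ∨ (¬HasDotBelow D i j ∧ ¬HasDotRight D i j))

/-- A leaf: a dotted cell with no dot below it in its column and no dot
to its right in its row. -/
def IsLeaf {n : ℕ} (D : Grid n) (i j : Fin n) : Prop :=
  Dotted D i j ∧ ¬HasDotBelow D i j ∧ ¬HasDotRight D i j

/-- An internal dot: a dotted cell with both a dot below it in its column and
a dot to its right in its row. -/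
def IsInternal {n : ℕ} (D : Grid n) (i j : Fin n) : Prop :=
  Dotted D i j ∧ HasDotBelow D i j ∧ HasDotRight D i j

/-- `p` is the nearest dotted cell above `l` in the column of `l`. -/
def ParentAbove {n : ℕ} (D : Grid n) (p l : Fin n × Fin n) : Prop :=
  p.2 = l.2 ∧ p.1 < l.1 ∧ Dotted D p.1 p.2 ∧
    ∀ k : Fin n, p.1 < k → k < l.1 → ¬Dotted D k l.2

/-- `p` is the nearest dotted cell to the left of `l` in the row of `l`,
and there is no dotted cell above `l` in its column. -/
def ParentLeft {n : ℕ} (D : Grid n) (p l : Fin n × Fin n) : Prop :=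
  p.1 = l.1 ∧ p.2 < l.2 ∧ Dotted D p.1 p.2 ∧
    (∀ k : Fin n, p.2 < k → k < l.2 → ¬Dotted D l.1 k) ∧
    ¬HasDotAbove D l.1 l.2

/-- `p` is the parent of the dot `l`: the nearest dotted cell above `l` in its
column if such a cell exists, otherwise the nearest dotted cell to its left. -/
def IsParent {n : ℕ} (D : Grid n) (p l : Fin n × Fin n) : Prop :=
  ParentAbove D p l ∨ ParentLeft D p l

/-- `c` is the left child of the internal dot `p`: the nearest dot below `p`
in the column of `p`. -/
def IsLeftChild {n : ℕ} (D : Grid n) (p c : Fin n × Fin n) : Prop :=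
  c.2 = p.2 ∧ p.1 < c.1 ∧ Dotted D c.1 c.2 ∧
    ∀ k : Fin n, p.1 < k → k < c.1 → ¬Dotted D k p.2

/-- `c` is the right child of the internal dot `p`: the nearest dot to the
right of `p` in the row of `p`. -/
def IsRightChild {n : ℕ} (D : Grid n) (p c : Fin n × Fin n) : Prop :=
  c.1 = p.1 ∧ p.2 < c.2 ∧ Dotted D c.1 c.2 ∧
    ∀ k : Fin n, p.2 < k → k < c.2 → ¬Dotted D p.1 k

/-- A left leaf: a leaf whose parent is above it in its column. -/
def IsLeftLeaf {n : ℕ} (D : Grid n) (l : Fin n × Fin n) : Prop :=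
  IsLeaf D l.1 l.2 ∧ ∃ p : Fin n × Fin n, ParentAbove D p l

/-- A right leaf: a leaf whose parent is to its left in its row. -/
def IsRightLeaf {n : ℕ} (D : Grid n) (l : Fin n × Fin n) : Prop :=
  IsLeaf D l.1 l.2 ∧ ∃ p : Fin n × Fin n, ParentLeft D p l

/-- A short leaf: a leaf whose parent lies in a cell adjacent to it. -/
def IsShortLeaf {n : ℕ} (D : Grid n) (l : Fin n × Fin n) : Prop :=
  IsLeaf D l.1 l.2 ∧ ∃ p : Fin n × Fin n, IsParent D p l ∧
    (((p.1 : ℕ) + 1 = (l.1 : ℕ) ∧ p.2 = l.2) ∨ ((p.2 : ℕ) + 1 = (l.2 : ℕ) ∧ p.1 = l.1))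

/-- A long leaf: a leaf which is not short. -/
def IsLongLeaf {n : ℕ} (D : Grid n) (l : Fin n × Fin n) : Prop :=
  IsLeaf D l.1 l.2 ∧ ¬IsShortLeaf D l

/-- All leaves of `D` are short (i.e. `D ∈ 𝒜ₙ`). -/
def AllLeavesShort {n : ℕ} (D : Grid n) : Prop :=
  ∀ l : Fin n × Fin n, IsLeaf D l.1 l.2 → IsShortLeaf D l

/-- `π` is the permutation associated with the CNAT `D`: for every row `i`,
the leaf of row `i` lies in column `π i`. -/
def IsAssocPerm {n : ℕ} (D : Grid n) (π : Equiv.Perm (Fin n)) : Prop :=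
  ∀ i : Fin n, IsLeaf D i (π i)

/-- Two left leaves `l₁`, `l₂` (with respective parents `p₁`, `p₂`) are
interacting if `r(p₁) < r(l₂) < r(l₁)` or `r(p₂) < r(l₁) < r(l₂)`. -/
def InteractingLeft {n : ℕ} (D : Grid n) (l₁ l₂ : Fin n × Fin n) : Prop :=
  IsLeftLeaf D l₁ ∧ IsLeftLeaf D l₂ ∧
    ∃ p₁ p₂ : Fin n × Fin n, ParentAbove D p₁ l₁ ∧ ParentAbove D p₂ l₂ ∧
      ((p₁.1 < l₂.1 ∧ l₂.1 < l₁.1) ∨ (p₂.1 < l₁.1 ∧ l₁.1 < l₂.1))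

/-- Two right leaves `l₁`, `l₂` (with respective parents `p₁`, `p₂`) are
interacting if `c(p₁) < c(l₂) < c(l₁)` or `c(p₂) < c(l₁) < c(l₂)`. -/
def InteractingRight {n : ℕ} (D : Grid n) (l₁ l₂ : Fin n × Fin n) : Prop :=
  IsRightLeaf D l₁ ∧ IsRightLeaf D l₂ ∧
    ∃ p₁ p₂ : Fin n × Fin n, ParentLeft D p₁ l₁ ∧ ParentLeft D p₂ l₂ ∧
      ((p₁.2 < l₂.2 ∧ l₂.2 < l₁.2) ∨ (p₂.2 < l₁.2 ∧ l₁.2 < l₂.2))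

/-- Two leaves are interacting (as left leaves or as right leaves). -/
def Interacting {n : ℕ} (D : Grid n) (l₁ l₂ : Fin n × Fin n) : Prop :=
  InteractingLeft D l₁ l₂ ∨ InteractingRight D l₁ l₂

/-- The switch `S(T, l₁, l₂)` of two interacting leaves: `l₁` and `l₂` are
erased and replaced by dots at `(r(l₂), c(l₁))` and `(r(l₁), c(l₂))`
(for left leaves this exchanges their row labels, for right leaves this
exchanges their column labels; both descriptions yield the same filling). -/
def switchLeaves {n : ℕ} (D : Grid n) (l₁ l₂ : Fin n × Fin n) : Grid n := fun i j =>
  if (i = l₂.1 ∧ j = l₁.2) ∨ (i = l₁.1 ∧ j = l₂.2) then true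
  else if (i = l₁.1 ∧ j = l₁.2) ∨ (i = l₂.1 ∧ j = l₂.2) then false
  else D i j


/-!
Suppose that all leaves are short, and let `d` have a leaf as its right child and an internal dot
as its left child. In the column of `d`, the lowest dot is a leaf, and its parent `d'` lies directly
above it; `d'` is strictly below `d`, because the left child of `d` is not a leaf. The right child
of `d'` is not a leaf: being short, it would be adjacent to `d'` and hence lie below the leaf
adjacent to `d`. So `d'` is again such a dot, with left and right exchanged. Iterating, the dots
move down and to the right for ever, which is impossible in a finite grid.
-/

/-- A complete non-ambiguous forest: `IsCNAT` without minimality and with any number of roots, a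
root being a dot that has no dot above it and none to its left. -/
structure IsCNAForest {n : ℕ} (D : Grid n) : Prop where
  not_hasDotLeft_of_hasDotAbove {i j : Fin n} :
    Dotted D i j → HasDotAbove D i j → ¬HasDotLeft D i j
  hasDotBelow_iff_hasDotRight {i j : Fin n} :
    Dotted D i j → (HasDotBelow D i j ↔ HasDotRight D i j)

/-- The reflection of a filling in the main diagonal, which exchanges left and right children. -/
def Grid.transpose {n : ℕ} (D : Grid n) : Grid n := fun i j => D j i

/-- The dot `(i, j)` has a leaf in the adjacent cell to its right, but none in the adjacent cell
below it (that cell may be empty or outside the grid). In a forest all of whose leaves are short,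
this says that the right child of `(i, j)` is a leaf and its left child is internal. -/
def IsRightMixed {n : ℕ} (D : Grid n) (i j : Fin n) : Prop :=
  Dotted D i j ∧ (∃ j', j ⋖ j' ∧ IsLeaf D i j') ∧ ∀ i', i ⋖ i' → ¬IsLeaf D i' j

variable {n : ℕ} {D : Grid n} {i j : Fin n}

theorem IsCNAT.isCNAForest (hD : IsCNAT D) : IsCNAForest D := by
  obtain ⟨-, hparent, -, -, hcomplete⟩ := hD
  refine ⟨fun {i j} hd habove hleft => ?_, fun hd => ?_⟩
  · have hroot : ¬((i : ℕ) = 0 ∧ (j : ℕ) = 0) := by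
      rintro ⟨hi, -⟩
      obtain ⟨i', hi', -⟩ := habove
      omega
    exact (not_xor _ _).2 (iff_of_true habove hleft) (hparent i j hd hroot)
  · exact iff_iff_and_or_not_and_not.2 (hcomplete _ _ hd)

theorem IsInternal.not_isLeaf (h : IsInternal D i j) : ¬IsLeaf D i j :=
  fun hleaf => hleaf.2.1 h.2.1

theorem isLeaf_transpose : IsLeaf D.transpose j i ↔ IsLeaf D i j :=
  and_congr_right' and_comm

namespace IsCNAForest

theorem transpose (hD : IsCNAForest D) : IsCNAForest D.transpose where
  not_hasDotLeft_of_hasDotAbove hd hleft habove :=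
    hD.not_hasDotLeft_of_hasDotAbove hd habove hleft
  hasDotBelow_iff_hasDotRight hd := (hD.hasDotBelow_iff_hasDotRight hd).symm

theorem isShortLeaf_iff (hD : IsCNAForest D) :
    IsShortLeaf D (i, j) ↔
      IsLeaf D i j ∧ ((∃ i', i' ⋖ i ∧ Dotted D i' j) ∨ ∃ j', j' ⋖ j ∧ Dotted D i j') := by
  have covBy_iff (a b : Fin n) : a ⋖ b ↔ (a : ℕ) + 1 = b :=
    Fin.covBy_iff.trans Nat.covBy_iff_add_one_eq
  refine and_congr_right fun hleaf => ⟨?_, ?_⟩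
  · rintro ⟨⟨i', j'⟩, hparent, hadj⟩
    have hd : Dotted D i' j' := by
      rcases hparent with ⟨-, -, hd, -⟩ | ⟨-, -, hd, -⟩ <;> exact hd
    rcases hadj with ⟨hi, rfl⟩ | ⟨hj, rfl⟩
    · exact .inl ⟨i', (covBy_iff _ _).2 hi, hd⟩
    · exact .inr ⟨j', (covBy_iff _ _).2 hj, hd⟩
  · rintro (⟨i', hi, hd⟩ | ⟨j', hj, hd⟩)
    · exact ⟨(i', j), .inl ⟨rfl, hi.lt, hd, fun _ h₁ h₂ => (hi.2 h₁ h₂).elim⟩,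
        .inl ⟨(covBy_iff _ _).1 hi, rfl⟩⟩
    · have habove : ¬HasDotAbove D i j := fun habove =>
        hD.not_hasDotLeft_of_hasDotAbove hleaf.1 habove ⟨j', hj.lt, hd⟩
      exact ⟨(i, j'), .inr ⟨rfl, hj.lt, hd, fun _ h₁ h₂ => (hj.2 h₁ h₂).elim, habove⟩,
        .inr ⟨(covBy_iff _ _).1 hj, rfl⟩⟩

theorem isShortLeaf_transpose (hD : IsCNAForest D) :
    IsShortLeaf D.transpose (j, i) ↔ IsShortLeaf D (i, j) := by
  rw [hD.isShortLeaf_iff, hD.transpose.isShortLeaf_iff, isLeaf_transpose]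
  exact and_congr_right' or_comm

theorem allLeavesShort_transpose (hD : IsCNAForest D) (hshort : AllLeavesShort D) :
    AllLeavesShort D.transpose :=
  fun l hl => hD.isShortLeaf_transpose.2 (hshort l.swap (isLeaf_transpose.1 hl))

theorem exists_isLeaf_right (hD : IsCNAForest D) (hright : HasDotRight D i j) :
    ∃ k, j < k ∧ IsLeaf D i k := by
  obtain ⟨k, ⟨hjk, hk⟩, hmax⟩ := {k | j < k ∧ Dotted D i k}.toFinite.exists_maximal hright
  have hlast : ¬HasDotRight D i k := fun ⟨l, hkl, hl⟩ =>
    hkl.not_ge (hmax ⟨hjk.trans hkl, hl⟩ hkl.le)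
  exact ⟨k, hjk, hk, mt (hD.hasDotBelow_iff_hasDotRight hk).1 hlast, hlast⟩

theorem exists_covBy_dotted_left (hD : IsCNAForest D) (hleaf : IsShortLeaf D (i, j))
    (hleft : HasDotLeft D i j) : ∃ k, k ⋖ j ∧ Dotted D i k := by
  obtain ⟨hleaf, ⟨k, hk, hd⟩ | hadj⟩ := hD.isShortLeaf_iff.1 hleaf
  · exact absurd hleft (hD.not_hasDotLeft_of_hasDotAbove hleaf.1 ⟨k, hk.lt, hd⟩)
  · exact hadj

theorem exists_covBy_isLeaf_right (hD : IsCNAForest D) (hshort : AllLeavesShort D)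
    (hd : Dotted D i j) (hright : HasDotRight D i j) :
    ∃ k l, j ≤ k ∧ k ⋖ l ∧ Dotted D i k ∧ IsLeaf D i l := by
  obtain ⟨l, hjl, hleaf⟩ := hD.exists_isLeaf_right hright
  obtain ⟨k, hkl, hk⟩ := hD.exists_covBy_dotted_left (hshort (i, l) hleaf) ⟨j, hjl, hd⟩
  exact ⟨k, l, hkl.le_of_lt hjl, hkl, hk, hleaf⟩

theorem exists_gt_isRightMixed_transpose (hD : IsCNAForest D) (hshort : AllLeavesShort D)
    (h : IsRightMixed D i j) : ∃ k, i < k ∧ IsRightMixed D.transpose j k := by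
  obtain ⟨hd, ⟨j', hj, hleaf⟩, hbelow⟩ := h
  have hdbelow : HasDotBelow D i j :=
    (hD.hasDotBelow_iff_hasDotRight hd).2 ⟨j', hj.lt, hleaf.1⟩
  obtain ⟨k, l, hik, hkl, hk, hl⟩ :=
    hD.transpose.exists_covBy_isLeaf_right (hD.allLeavesShort_transpose hshort) hd hdbelow
  have hne : i ≠ k := by
    rintro rfl
    exact hbelow l hkl (isLeaf_transpose.1 hl)
  have hlt : i < k := hik.lt_of_ne hne
  refine ⟨k, hlt, hk, ⟨l, hkl, hl⟩, fun m hm hmleaf => ?_⟩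
  obtain rfl : m = j' := hm.unique_right hj
  exact hleaf.2.1 ⟨k, hlt, hmleaf.1⟩

theorem not_isRightMixed (hD : IsCNAForest D) (hshort : AllLeavesShort D) (i j : Fin n) :
    ¬IsRightMixed D i j := by
  induction i using WellFoundedGT.induction generalizing j with
  | ind i ih =>
    intro h
    obtain ⟨k, hik, hk⟩ := hD.exists_gt_isRightMixed_transpose hshort h
    obtain ⟨l, -, hl⟩ := hD.transpose.exists_gt_isRightMixed_transpose
      (hD.allLeavesShort_transpose hshort) hk
    exact ih k hik l hl

theorem isRightMixed_of_isRightChild (hD : IsCNAForest D) (hshort : AllLeavesShort D)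
    {d c₁ c₂ : Fin n × Fin n} (hd : Dotted D d.1 d.2) (hc₁ : IsLeftChild D d c₁)
    (hc₂ : IsRightChild D d c₂) (hnotLeaf : ¬IsLeaf D c₁.1 c₁.2) (hleaf : IsLeaf D c₂.1 c₂.2) :
    IsRightMixed D d.1 d.2 := by
  obtain ⟨i, j⟩ := d
  obtain ⟨i₁, j₁⟩ := c₁
  obtain ⟨i₂, j₂⟩ := c₂
  obtain ⟨rfl, hi₁, hd₁, -⟩ := hc₁
  obtain ⟨rfl, hj₂, -, hnearest⟩ := hc₂
  refine ⟨hd, ⟨j₂, ?_, hleaf⟩, fun k hk hkleaf => ?_⟩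
  · obtain ⟨k, hk, hdk⟩ := hD.exists_covBy_dotted_left (hshort (i₂, j₂) hleaf) ⟨j₁, hj₂, hd⟩
    obtain rfl : j₁ = k := (hk.le_of_lt hj₂).eq_of_not_lt fun hlt => hnearest k hlt hk.lt hdk
    exact hk
  · obtain rfl : k = i₁ :=
      (hk.ge_of_gt hi₁).eq_of_not_lt fun hlt => hkleaf.2.1 ⟨i₁, hlt, hd₁⟩
    exact hnotLeaf hkleaf

end IsCNAForest

theorem cnat_mixed_children_long_leaf_general (hD : IsCNAForest D) {d c₁ c₂ : Fin n × Fin n}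
    (hd : Dotted D d.1 d.2) (hc₁ : IsLeftChild D d c₁) (hc₂ : IsRightChild D d c₂)
    (h : (IsLeaf D c₁.1 c₁.2 ∧ IsInternal D c₂.1 c₂.2) ∨
      (IsInternal D c₁.1 c₁.2 ∧ IsLeaf D c₂.1 c₂.2)) :
    ∃ l : Fin n × Fin n, IsLongLeaf D l := by
  by_contra hlong
  have hshort : AllLeavesShort D := fun l hl => by_contra fun hl' => hlong ⟨l, hl, hl'⟩
  rcases h with ⟨hleaf, hinternal⟩ | ⟨hinternal, hleaf⟩
  · have hshort' := hD.allLeavesShort_transpose hshort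
    have hmixed : IsRightMixed D.transpose d.2 d.1 :=
      hD.transpose.isRightMixed_of_isRightChild (d := d.swap) (c₁ := c₂.swap) (c₂ := c₁.swap)
        hshort' hd hc₂ hc₁ (mt isLeaf_transpose.1 hinternal.not_isLeaf) (isLeaf_transpose.2 hleaf)
    exact hD.transpose.not_isRightMixed hshort' d.2 d.1 hmixed
  · exact hD.not_isRightMixed hshort d.1 d.2 <|
      hD.isRightMixed_of_isRightChild hshort hd hc₁ hc₂ hinternal.not_isLeaf hleaf

/-- Let `T` be a CNAT which has an internal dot whose two
children are a leaf and an internal dot. Then `T` contains at least one long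
leaf. -/
theorem cnat_mixed_children_long_leaf (n : ℕ) (D : Grid n) (hD : IsCNAT D)
    (h : ∃ d c₁ c₂ : Fin n × Fin n, IsInternal D d.1 d.2 ∧
        IsLeftChild D d c₁ ∧ IsRightChild D d c₂ ∧
        ((IsLeaf D c₁.1 c₁.2 ∧ IsInternal D c₂.1 c₂.2) ∨
         (IsInternal D c₁.1 c₁.2 ∧ IsLeaf D c₂.1 c₂.2))) :
    ∃ l : Fin n × Fin n, IsLongLeaf D l := by
  obtain ⟨d, c₁, c₂, hd, hc₁, hc₂, hmixed⟩ := h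
  exact cnat_mixed_children_long_leaf_general hD.isCNAForest hd.1 hc₁ hc₂ hmixed

end CNATf
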